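/- arXiv:1505.06651 — 8 statements merged into one kernel-verified Lean document; each statement's English description precedes it below -/
import Mathlib

section
/- The composition axiom COMPKh is valid: for all formulas φ, χ, ρ of L_Kh, the formula Kh(φ,ρ) ∧ Kh(ρ,χ) → Kh(φ,χ) is true at every state of every model. -/
/-- Formulas of the language L_Kh. -/
inductive Formula (P : Type) : Type
  | top : Formula P
  | atom : P → Formula P
  | neg : Formula P → Formula P
  | and : Formula P → Formula P → Formula P
  | kh : Formula P → Formula P → Formula P

namespace Formula

/-- ⊥ abbreviates ¬⊤. -/
def bot {P : Type} : Formula P := neg top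

/-- φ → ψ abbreviates ¬(φ ∧ ¬ψ). -/
def imp {P : Type} (φ ψ : Formula P) : Formula P := neg (φ.and ψ.neg)

/-- φ ↔ ψ. -/
def iff_ {P : Type} (φ ψ : Formula P) : Formula P := (φ.imp ψ).and (ψ.imp φ)

/-- Uφ abbreviates Kh(¬φ, ⊥). -/
def U {P : Type} (φ : Formula P) : Formula P := kh (neg φ) bot

end Formula

/-- A model (ability map): a labelled transition system with a nonempty set
of states, transitions labelled by action symbols in `A`, and a valuation. -/
structure Model (P A : Type) where
  S : Type
  ne : Nonempty S
  R : A → S → S → Prop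
  V : S → Set P

namespace Model

/-- `runs M σ s t` means s →σ t. -/
def runs {P A : Type} (M : Model P A) : List A → M.S → M.S → Prop
  | [], s, t => s = t
  | a :: σ, s, t => ∃ u, M.R a s u ∧ M.runs σ u t

/-- σ = a₁…aₙ is strongly executable at s: for every k < n and every t
reached from s by the length-k prefix of σ, t has an a_{k+1}-successor. -/
def SE {P A : Type} (M : Model P A) (σ : List A) (s : M.S) : Prop :=
  ∀ (k : ℕ) (hk : k < σ.length) (t : M.S),
    M.runs (σ.take k) s t → ∃ u, M.R (σ.get ⟨k, hk⟩) t u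

end Model

/-- Truth of a formula at a state of a model. -/
def Sat {P A : Type} (M : Model P A) : Formula P → M.S → Prop
  | .top, _ => True
  | .atom p, s => p ∈ M.V s
  | .neg φ, s => ¬ Sat M φ s
  | .and φ ψ, s => Sat M φ s ∧ Sat M ψ s
  | .kh ψ φ, _ => ∃ σ : List A, ∀ s' : M.S, Sat M ψ s' →
      M.SE σ s' ∧ ∀ t : M.S, M.runs σ s' t → Sat M φ t

/-- Validity: truth at every state of every model (over a countable
nonempty set of action symbols). -/
def Valid {P : Type} (φ : Formula P) : Prop :=
  ∀ (A : Type) [Countable A] [Nonempty A] (M : Model P A) (s : M.S), Sat M φ s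

/-- Boolean evaluation of a formula, treating atoms and Kh-formulas as
propositional variables (used to define instances of propositional tautologies). -/
def evalB {P : Type} (v : Formula P → Bool) : Formula P → Bool
  | .top => true
  | .atom p => v (.atom p)
  | .neg φ => !(evalB v φ)
  | .and φ ψ => evalB v φ && evalB v ψ
  | .kh ψ φ => v (.kh ψ φ)

/-- Uniform substitution of formulas for proposition letters. -/
def subst {P : Type} (s : P → Formula P) : Formula P → Formula P
  | .top => .top
  | .atom p => s p
  | .neg φ => (subst s φ).neg
  | .and φ ψ => (subst s φ).and (subst s ψ)
  | .kh ψ φ => (subst s ψ).kh (subst s φ)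

/-- The proof system SKH. -/
inductive Derivable {P : Type} : Formula P → Prop
  /-- all instances of propositional tautologies -/
  | taut {φ : Formula P} : (∀ v : Formula P → Bool, evalB v φ = true) → Derivable φ
  /-- DISTU -/
  | distU (φ ψ : Formula P) : Derivable (((φ.U).and ((φ.imp ψ).U)).imp ψ.U)
  /-- COMPKh -/
  | compKh (φ ρ χ : Formula P) : Derivable (((φ.kh ρ).and (ρ.kh χ)).imp (φ.kh χ))
  /-- EMP -/
  | emp (φ χ : Formula P) : Derivable (((φ.imp χ).U).imp (φ.kh χ))
  /-- TU -/
  | tU (φ : Formula P) : Derivable ((φ.U).imp φ)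
  /-- 4KU -/
  | fourKU (φ χ : Formula P) : Derivable ((φ.kh χ).imp ((φ.kh χ).U))
  /-- 5KU -/
  | fiveKU (φ χ : Formula P) : Derivable (((φ.kh χ).neg).imp (((φ.kh χ).neg).U))
  /-- modus ponens -/
  | mp {φ ψ : Formula P} : Derivable (φ.imp ψ) → Derivable φ → Derivable ψ
  /-- NECU -/
  | necU {φ : Formula P} : Derivable φ → Derivable φ.U
  /-- SUB: uniform substitution -/
  | sub {φ : Formula P} (s : P → Formula P) : Derivable φ → Derivable (subst s φ)

/-- A set of formulas is SKH-consistent if no finite conjunction of its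
members proves ⊥ in SKH. -/
def Consistent {P : Type} (Γ : Set (Formula P)) : Prop :=
  ¬ ∃ l : List (Formula P), (∀ φ ∈ l, φ ∈ Γ) ∧
      Derivable ((l.foldr Formula.and Formula.top).imp Formula.bot)

/-- Maximal consistent set. -/
def MCS {P : Type} (Γ : Set (Formula P)) : Prop :=
  Consistent Γ ∧ ∀ Δ : Set (Formula P), Consistent Δ → Γ ⊆ Δ → Δ = Γ

/-- Δ|_Kh : the Kh-formulas in Δ. -/
def khPart {P : Type} (Δ : Set (Formula P)) : Set (Formula P) :=
  {χ | χ ∈ Δ ∧ ∃ ψ φ : Formula P, χ = ψ.kh φ}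

/-- The states S^c_Γ of the canonical model for Γ. -/
def canonStates {P : Type} (Γ : Set (Formula P)) : Set (Set (Formula P)) :=
  {Δ | MCS Δ ∧ khPart Δ = khPart Γ}

/-- The action symbols Σ_Γ of the canonical model: pairs ⟨ψ,φ⟩ with Kh(ψ,φ) ∈ Γ. -/
def SigmaGamma {P : Type} (Γ : Set (Formula P)) : Type :=
  {pr : Formula P × Formula P // (pr.1.kh pr.2) ∈ Γ}

/-- The canonical model M^c_Γ for a maximal consistent set Γ. -/
def canonicalModel {P : Type} (Γ : Set (Formula P)) (hΓ : MCS Γ) :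
    Model P (SigmaGamma Γ) where
  S := {Δ : Set (Formula P) // Δ ∈ canonStates Γ}
  ne := ⟨⟨Γ, hΓ, rfl⟩⟩
  R := fun a Δ Θ => a.val.1 ∈ Δ.val ∧ a.val.2 ∈ Θ.val
  V := fun Δ => {p | Formula.atom p ∈ Δ.val}

theorem runs_append_iff {P A : Type} (M : Model P A) (σ η : List A) (s t : M.S) :
    M.runs (σ ++ η) s t ↔ ∃ u, M.runs σ s u ∧ M.runs η u t := by
  induction σ generalizing s with
  | nil => simp [Model.runs]
  | cons a σ ih =>
    simp only [List.cons_append, Model.runs, ih]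
    constructor
    · rintro ⟨u, h, v, h1, h2⟩
      exact ⟨v, ⟨u, h, h1⟩, h2⟩
    · rintro ⟨v, ⟨u, h, h1⟩, h2⟩
      exact ⟨u, h, v, h1, h2⟩

theorem SE_append_of {P A : Type} (M : Model P A) (σ η : List A) (s : M.S)
    (h1 : M.SE σ s) (h2 : ∀ u, M.runs σ s u → M.SE η u) : M.SE (σ ++ η) s := by
  intro k hk t ht
  by_cases hlt : k < σ.length
  · rw [List.take_append_of_le_length hlt.le] at ht
    obtain ⟨u, hu⟩ := h1 k hlt t ht
    refine ⟨u, ?_⟩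
    simpa [List.getElem_append_left hlt] using hu
  · have hle : σ.length ≤ k := not_lt.mp hlt
    rw [List.take_append, List.take_of_length_le hle, runs_append_iff] at ht
    obtain ⟨v, hv, hvt⟩ := ht
    have hk2 : k - σ.length < η.length := by
      rw [List.length_append] at hk
      omega
    obtain ⟨u, hu⟩ := h2 v hv (k - σ.length) hk2 t hvt
    refine ⟨u, ?_⟩
    simpa [List.getElem_append_right hle] using hu

/-- the composition axiom COMPKh, Kh(φ,ρ) ∧ Kh(ρ,χ) → Kh(φ,χ),
is valid. -/
theorem compKh_valid {P : Type} (φ χ ρ : Formula P) :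
    Valid (((φ.kh ρ).and (ρ.kh χ)).imp (φ.kh χ)) := by
  intro A _ _ M s
  simp only [Formula.imp, Sat]
  rintro ⟨⟨⟨σ, hσ⟩, ⟨η, hη⟩⟩, hn⟩
  apply hn
  refine ⟨σ ++ η, fun s' hs' => ⟨?_, ?_⟩⟩
  · exact SE_append_of M σ η s' (hσ s' hs').1
      (fun u hu => (hη u ((hσ s' hs').2 u hu)).1)
  · intro t ht
    obtain ⟨u, hu, hut⟩ := (runs_append_iff M σ η s' t).1 ht
    exact (hη u ((hσ s' hs').2 u hu)).2 t hut
end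

section
/- The axiom TU is valid: for every formula φ of L_Kh, the formula Uφ → φ is true at every state of every model. -/
theorem Model.exists_run {P A : Type} (M : Model P A) :
    ∀ (σ : List A) (s : M.S), M.SE σ s → ∃ t, M.runs σ s t
  | [], s, _ => ⟨s, rfl⟩
  | a :: σ, s, h => by
    obtain ⟨u, hu⟩ := h 0 (by simp) s rfl
    have h2 : M.SE σ u := by
      intro k hk t ht
      exact h (k + 1) (by simpa using hk) t ⟨u, hu, ht⟩
    obtain ⟨t, ht⟩ := Model.exists_run M σ u h2
    exact ⟨t, u, hu, ht⟩

/-- the axiom TU, Uφ → φ, is valid. -/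
theorem tU_valid {P : Type} (φ : Formula P) :
    Valid ((φ.U).imp φ) := by
  intro A _ _ M s
  rintro ⟨⟨σ, hσ⟩, hn⟩
  obtain ⟨hse, hb⟩ := hσ s hn
  obtain ⟨t, ht⟩ := M.exists_run σ s hse
  exact hb t ht trivial
end

section
/- The formula Kh(p,q) ∧ Kh(p,r) → Kh(p, q∧r) is not valid: there exist a model M and a state s of M, with distinct proposition letters p, q, r, such that M,s ⊨ Kh(p,q) and M,s ⊨ Kh(p,r) but M,s ⊭ Kh(p, q∧r). -/
/-- Kh(p,q) ∧ Kh(p,r) → Kh(p, q∧r) is not valid: there are a model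
M, a state s, and distinct proposition letters p, q, r with
M,s ⊨ Kh(p,q), M,s ⊨ Kh(p,r) but M,s ⊭ Kh(p, q∧r). -/
theorem kh_not_closed_under_conjunction :
    ∃ (P : Type) (p q r : P), p ≠ q ∧ p ≠ r ∧ q ≠ r ∧
      ∃ (A : Type) (_ : Countable A) (_ : Nonempty A) (M : Model P A) (s : M.S),
        Sat M ((Formula.atom p).kh (Formula.atom q)) s ∧
        Sat M ((Formula.atom p).kh (Formula.atom r)) s ∧
        ¬ Sat M ((Formula.atom p).kh ((Formula.atom q).and (Formula.atom r))) s := by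
  let M : Model (Fin 3) Unit :=
    { S := Bool
      ne := ⟨true⟩
      R := fun _ _ t => t = false
      V := fun s => if s = true then {0, 1} else {2} }
  have hrun : ∀ (σ : List Unit) (s : M.S), ∃ t, M.runs σ s t := by
    intro σ
    induction σ with
    | nil => exact fun s => ⟨s, rfl⟩
    | cons a σ ih =>
      intro s
      obtain ⟨t, ht⟩ := ih false
      exact ⟨t, false, rfl, ht⟩
  have hSE : ∀ (σ : List Unit) (s : M.S), M.SE σ s :=
    fun σ s k hk t _ => ⟨false, rfl⟩
  refine ⟨Fin 3, 0, 1, 2, by decide, by decide, by decide, Unit, inferInstance,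
    inferInstance, M, true, ⟨[], ?_⟩, ⟨[()], ?_⟩, ?_⟩
  · intro s' hs
    refine ⟨hSE _ _, ?_⟩
    intro t ht
    cases ht
    cases s' <;> simp [Sat, M] at hs ⊢
  · intro s' hs
    refine ⟨hSE _ _, ?_⟩
    rintro t ⟨u, hu, ht⟩
    cases ht
    cases hu
    simp [Sat, M]
  · rintro ⟨σ, h⟩
    obtain ⟨t, ht⟩ := hrun σ true
    have h2 := (h true (by simp [Sat, M])).2 t ht
    cases t <;> simp [Sat, M] at h2
end

section
/- The proof system SKH is sound: for every formula φ of L_Kh, if ⊢ φ in SKH then φ is valid, i.e., true at every state of every model. -/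
theorem se_cons {P A : Type} (M : Model P A) (a : A) (σ : List A) (s : M.S) :
    M.SE (a :: σ) s ↔ (∃ u, M.R a s u) ∧ ∀ u, M.R a s u → M.SE σ u := by
  constructor
  · intro h
    refine ⟨h 0 (by simp) s rfl, fun u hu k hk t ht => ?_⟩
    exact h (k + 1) (by simpa using hk) t ⟨u, hu, ht⟩
  · rintro ⟨h0, h⟩ k hk t ht
    cases k with
    | zero =>
      have e : s = t := ht
      subst e
      exact h0
    | succ k =>
      obtain ⟨u, hu, ht⟩ := ht
      exact h u hu k (by simpa using hk) t ht

theorem se_nil {P A : Type} (M : Model P A) (s : M.S) : M.SE [] s := by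
  intro k hk
  simp at hk

theorem se_run {P A : Type} (M : Model P A) (σ : List A) :
    ∀ s, M.SE σ s → ∃ t, M.runs σ s t := by
  induction σ with
  | nil => exact fun s _ => ⟨s, rfl⟩
  | cons a σ ih =>
    intro s h
    obtain ⟨⟨u, hu⟩, h⟩ := (se_cons M a σ s).1 h
    obtain ⟨t, ht⟩ := ih u (h u hu)
    exact ⟨t, u, hu, ht⟩

theorem runs_append {P A : Type} (M : Model P A) (σ τ : List A) :
    ∀ s t, M.runs (σ ++ τ) s t → ∃ u, M.runs σ s u ∧ M.runs τ u t := by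
  induction σ with
  | nil => exact fun s t h => ⟨s, rfl, h⟩
  | cons a σ ih =>
    rintro s t ⟨u, hu, h⟩
    obtain ⟨w, h1, h2⟩ := ih u t h
    exact ⟨w, ⟨u, hu, h1⟩, h2⟩

theorem se_append {P A : Type} (M : Model P A) (σ τ : List A) :
    ∀ s, M.SE σ s → (∀ u, M.runs σ s u → M.SE τ u) → M.SE (σ ++ τ) s := by
  induction σ with
  | nil => exact fun s _ h => h s rfl
  | cons a σ ih =>
    intro s h1 h2
    obtain ⟨h0, h⟩ := (se_cons M a σ s).1 h1
    exact (se_cons M a (σ ++ τ) s).2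
      ⟨h0, fun u hu => ih u (h u hu) fun w hw => h2 w ⟨u, hu, hw⟩⟩

theorem sat_imp {P A : Type} (M : Model P A) (φ ψ : Formula P) (s : M.S) :
    Sat M (φ.imp ψ) s ↔ (Sat M φ s → Sat M ψ s) := by
  simp only [Formula.imp, Sat]
  tauto

theorem sat_U {P A : Type} (M : Model P A) (φ : Formula P) (s : M.S) :
    Sat M φ.U s ↔ ∀ t, Sat M φ t := by
  simp only [Formula.U, Formula.bot, Sat]
  constructor
  · rintro ⟨σ, h⟩ t
    by_contra ht
    obtain ⟨h1, h2⟩ := h t ht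
    obtain ⟨u, hu⟩ := se_run M σ t h1
    exact h2 u hu trivial
  · intro h
    exact ⟨[], fun t ht => absurd (h t) ht⟩

/-- Change of valuation. -/
def reval {P A : Type} (M : Model P A) (s : P → Formula P) : Model P A where
  S := M.S
  ne := M.ne
  R := M.R
  V := fun t => {p | Sat M (s p) t}

theorem reval_runs {P A : Type} (M : Model P A) (f : P → Formula P) (σ : List A) :
    ∀ s t : M.S, (reval M f).runs σ s t ↔ M.runs σ s t := by
  induction σ with
  | nil => exact fun s t => Iff.rfl
  | cons a σ ih =>
    intro s t
    exact exists_congr fun u => and_congr Iff.rfl (ih u t)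

theorem reval_se {P A : Type} (M : Model P A) (f : P → Formula P) (σ : List A) (s : M.S) :
    (reval M f).SE σ s ↔ M.SE σ s :=
  forall_congr' fun k => forall_congr' fun _ => forall_congr' fun t =>
    imp_congr (reval_runs M f (σ.take k) s t) Iff.rfl

theorem reval_sat {P A : Type} (M : Model P A) (f : P → Formula P) (φ : Formula P) :
    ∀ s : M.S, Sat (reval M f) φ s ↔ Sat M (subst f φ) s := by
  induction φ with
  | top => exact fun s => Iff.rfl
  | atom p => exact fun s => Iff.rfl
  | neg φ ih => exact fun s => not_congr (ih s)
  | and φ ψ ih1 ih2 => exact fun s => and_congr (ih1 s) (ih2 s)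
  | kh φ ψ ih1 ih2 =>
    exact fun s => exists_congr fun σ => forall_congr' fun t => imp_congr (ih1 t)
      (and_congr (reval_se M f σ t) (forall_congr' fun u =>
        imp_congr (reval_runs M f σ t u) (ih2 u)))

open Classical in
theorem evalB_sat {P A : Type} (M : Model P A) (s : M.S) (φ : Formula P) :
    evalB (fun χ => decide (Sat M χ s)) φ = true ↔ Sat M φ s := by
  induction φ with
  | top => simp [evalB, Sat]
  | atom p => simp [evalB]
  | neg φ ih => simp only [evalB, Sat, ← ih]; simp
  | and φ ψ ih1 ih2 => simp only [evalB, Sat, ← ih1, ← ih2]; simp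
  | kh φ ψ _ _ => simp [evalB]

/-- the proof system SKH is sound: every SKH-derivable formula
is valid, i.e., true at every state of every model. -/
theorem skh_sound {P : Type} (φ : Formula P) (h : Derivable φ) : Valid φ := by
  induction h with
  | taut h =>
    intro A _ _ M s
    exact (evalB_sat M s _).1 (h _)
  | distU φ ψ =>
    intro A _ _ M s
    rw [sat_imp]
    rintro ⟨h1, h2⟩
    rw [sat_U] at *
    exact fun t => (sat_imp M _ _ t).1 (h2 t) (h1 t)
  | compKh φ ρ χ =>
    intro A _ _ M s
    rw [sat_imp]
    rintro ⟨⟨σ, h1⟩, ⟨τ, h2⟩⟩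
    refine ⟨σ ++ τ, fun t ht => ⟨?_, fun u hu => ?_⟩⟩
    · exact se_append M σ τ t (h1 t ht).1 fun u hu => (h2 u ((h1 t ht).2 u hu)).1
    · obtain ⟨w, hw, hu⟩ := runs_append M σ τ t u hu
      exact (h2 w ((h1 t ht).2 w hw)).2 u hu
  | emp φ χ =>
    intro A _ _ M s
    rw [sat_imp, sat_U]
    intro h
    refine ⟨[], fun t ht => ⟨se_nil M t, fun u hu => ?_⟩⟩
    have e : t = u := hu
    subst e
    exact (sat_imp M _ _ t).1 (h t) ht
  | tU φ =>
    intro A _ _ M s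
    rw [sat_imp, sat_U]
    exact fun h => h s
  | fourKU φ χ =>
    intro A _ _ M s
    rw [sat_imp, sat_U]
    exact fun h t => h
  | fiveKU φ χ =>
    intro A _ _ M s
    rw [sat_imp, sat_U]
    exact fun h t => h
  | mp _ _ ih1 ih2 =>
    intro A _ _ M s
    exact (sat_imp M _ _ s).1 (ih1 A M s) (ih2 A M s)
  | necU _ ih =>
    intro A _ _ M s
    exact (sat_U M _ s).2 fun t => ih A M t
  | sub f _ ih =>
    intro A _ _ M s
    exact (reval_sat M f _ s).1 (ih A (reval M f) s)
end

section
/- The weakening/strengthening formula WSKh is derivable in SKH: for all formulas φ, χ, ρ, ο of L_Kh, ⊢ U(φ→ρ) ∧ U(ο→χ) ∧ Kh(ρ,ο) → Kh(φ,χ). -/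
/-- WSKh is derivable in SKH:
⊢ U(φ→ρ) ∧ U(ο→χ) ∧ Kh(ρ,ο) → Kh(φ,χ). -/
theorem wskh_derivable {P : Type} (φ χ ρ ο : Formula P) :
    Derivable ((((φ.imp ρ).U).and ((((ο.imp χ).U)).and (ρ.kh ο))).imp (φ.kh χ)) := by
  have key : ∀ a b r k1 k2 k3 k4 : Formula P,
      Derivable ((a.imp k1).imp ((b.imp k2).imp (((k1.and r).imp k3).imp
        (((k3.and k2).imp k4).imp ((a.and (b.and r)).imp k4))))) := by
    intro a b r k1 k2 k3 k4
    apply Derivable.taut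
    intro v
    simp only [Formula.imp, evalB]
    cases evalB v a <;> cases evalB v b <;> cases evalB v r <;> cases evalB v k1 <;>
      cases evalB v k2 <;> cases evalB v k3 <;> cases evalB v k4 <;> rfl
  exact Derivable.mp (Derivable.mp (Derivable.mp (Derivable.mp (key _ _ _ _ _ _ _)
    (Derivable.emp φ ρ)) (Derivable.emp ο χ)) (Derivable.compKh φ ρ ο)) (Derivable.compKh φ ο χ)
end

section
/- The formula PREKh is derivable in SKH: for all formulas φ, χ of L_Kh, ⊢ Kh(Kh(φ,χ) ∧ φ, χ). -/
/-- PREKh is derivable in SKH: ⊢ Kh(Kh(φ,χ) ∧ φ, χ). -/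
theorem prekh_derivable {P : Type} (φ χ : Formula P) :
    Derivable (((φ.kh χ).and φ).kh χ) := by
  have a1 : Derivable ((((φ.kh χ).and φ).imp φ).U) := by
    apply Derivable.necU
    apply Derivable.taut
    intro v
    simp only [Formula.imp, evalB]
    cases v (φ.kh χ) <;> cases evalB v φ <;> rfl
  have a2 := Derivable.mp (Derivable.emp _ _) a1
  have a3 := Derivable.compKh ((φ.kh χ).and φ) φ χ
  have b1 : Derivable (((φ.kh χ).neg.imp (((φ.kh χ).and φ).imp χ)).U) := by
    apply Derivable.necU
    apply Derivable.taut
    intro v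
    simp only [Formula.imp, evalB]
    cases v (φ.kh χ) <;> cases evalB v φ <;> cases evalB v χ <;> rfl
  have b2 := Derivable.distU (φ.kh χ).neg (((φ.kh χ).and φ).imp χ)
  have b3 := Derivable.emp ((φ.kh χ).and φ) χ
  have b4 := Derivable.fiveKU φ χ
  have key : ∀ A B C D E F : Formula P, Derivable (A.imp (((A.and B).imp C).imp
      ((D.and E).imp F |>.imp (E.imp ((F.imp C).imp ((B.neg.imp D).imp C)))))) := by
    intro A B C D E F
    apply Derivable.taut
    intro v
    simp only [Formula.imp, evalB]
    cases evalB v A <;> cases evalB v B <;> cases evalB v C <;> cases evalB v D <;>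
      cases evalB v E <;> cases evalB v F <;> rfl
  exact .mp (.mp (.mp (.mp (.mp (.mp (key _ (φ.kh χ) _ _ _ _) a2) a3) b2) b1) b3) b4
end

section
/- The formula POSTKh is derivable in SKH: for all formulas φ, χ, ρ of L_Kh, ⊢ Kh(ρ, Kh(φ,χ) ∧ φ) → Kh(ρ, χ). -/
/-- POSTKh is derivable in SKH:
⊢ Kh(ρ, Kh(φ,χ) ∧ φ) → Kh(ρ, χ). -/
theorem postkh_derivable {P : Type} (φ χ ρ : Formula P) :
    Derivable ((ρ.kh ((φ.kh χ).and φ)).imp (ρ.kh χ)) := by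
  have h1 : Derivable ((((φ.kh χ).and φ)).kh φ) :=
    .mp (.emp _ _) (.necU (.taut (by
      intro v; simp only [Formula.imp, evalB]
      cases v (φ.kh χ) <;> cases evalB v φ <;> rfl)))
  have h2 := Derivable.compKh ((φ.kh χ).and φ) φ χ
  have h3 := Derivable.fiveKU φ χ
  have h4 : Derivable (((φ.kh χ).neg.imp (((φ.kh χ).and φ).imp χ)).U) :=
    .necU (.taut (by
      intro v; simp only [Formula.imp, evalB]
      cases v (φ.kh χ) <;> cases evalB v φ <;> cases evalB v χ <;> rfl))
  have h5 := Derivable.distU (φ.kh χ).neg (((φ.kh χ).and φ).imp χ)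
  have h6 := Derivable.emp ((φ.kh χ).and φ) χ
  have h7 := Derivable.compKh ρ ((φ.kh χ).and φ) χ
  refine .mp (.mp (.mp (.mp (.mp (.mp (.mp (.taut ?_) h1) h2) h3) h4) h5) h6) h7
  intro v
  simp only [Formula.imp, Formula.U, evalB]
  grind
end

section
/- In the canonical model: if a formula φ belongs to every state Δ of S^c_Γ, then Uφ belongs to every state Δ of S^c_Γ. -/
theorem evalB_imp {P : Type} (v : Formula P → Bool) (a b : Formula P) :
    evalB v (a.imp b) = true ↔ (evalB v a = true → evalB v b = true) := by
  simp only [Formula.imp, evalB]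
  cases evalB v a <;> cases evalB v b <;> simp

theorem evalB_bot {P : Type} (v : Formula P → Bool) :
    evalB v (Formula.bot) = false := by
  simp [Formula.bot, evalB]

theorem evalB_conj {P : Type} (v : Formula P → Bool) (l : List (Formula P)) :
    evalB v (l.foldr Formula.and Formula.top) = true ↔ ∀ x ∈ l, evalB v x = true := by
  induction l with
  | nil => simp [evalB]
  | cons a l ih => simp [evalB, ih]

theorem der_of {P : Type} {a b : Formula P} (h : Derivable a)
    (hv : ∀ v, evalB v a = true → evalB v b = true) : Derivable b :=
  .mp (.taut fun v => (evalB_imp v a b).2 (hv v)) h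

theorem der_of2 {P : Type} {a b c : Formula P} (h : Derivable a) (h' : Derivable b)
    (hv : ∀ v, evalB v a = true → evalB v b = true → evalB v c = true) : Derivable c :=
  .mp (.mp (.taut fun v => (evalB_imp v a _).2 fun h => (evalB_imp v b c).2 (hv v h)) h) h'

def Prov {P : Type} (G : Set (Formula P)) (χ : Formula P) : Prop :=
  ∃ l : List (Formula P), (∀ x ∈ l, x ∈ G) ∧
    Derivable ((l.foldr Formula.and Formula.top).imp χ)

theorem Prov.ofMem {P : Type} {G : Set (Formula P)} {χ : Formula P} (h : χ ∈ G) : Prov G χ :=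
  ⟨[χ], by simpa using h, .taut fun v => by simp [evalB_imp, evalB]⟩

theorem Prov.ofDer {P : Type} {G : Set (Formula P)} {χ : Formula P} (h : Derivable χ) :
    Prov G χ :=
  ⟨[], by simp, der_of h fun v => by simp [evalB_imp, evalB]⟩

theorem Prov.of2 {P : Type} {G : Set (Formula P)} {a b c : Formula P} (h : Prov G a)
    (h' : Prov G b) (hv : ∀ v, evalB v a = true → evalB v b = true → evalB v c = true) :
    Prov G c := by
  obtain ⟨l, hl, hd⟩ := h
  obtain ⟨m, hm, hd'⟩ := h'
  refine ⟨l ++ m, ?_, der_of2 hd hd' fun v => ?_⟩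
  · intro x hx
    rcases List.mem_append.1 hx with hx | hx
    · exact hl x hx
    · exact hm x hx
  · rw [evalB_imp, evalB_imp, evalB_imp, evalB_conj, evalB_conj, evalB_conj]
    intro h1 h2 h3
    exact hv v (h1 fun x hx => h3 x (List.mem_append_left _ hx))
      (h2 fun x hx => h3 x (List.mem_append_right _ hx))

theorem Prov.ded {P : Type} {G : Set (Formula P)} {a b : Formula P}
    (h : Prov (insert a G) b) : Prov G (a.imp b) := by
  classical
  obtain ⟨l, hl, hd⟩ := h
  refine ⟨l.filter (fun x => x ≠ a), ?_, der_of hd fun v => ?_⟩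
  · intro x hx
    have := List.mem_filter.1 hx
    rcases hl x this.1 with h | h
    · simp [h] at this
    · exact h
  · rw [evalB_imp, evalB_imp, evalB_imp, evalB_conj, evalB_conj]
    intro h1 h2 h3
    refine h1 fun x hx => ?_
    by_cases hxa : x = a
    · rw [hxa]; exact h3
    · exact h2 x (List.mem_filter.2 ⟨hx, by simpa using hxa⟩)

theorem MCS.mem {P : Type} {G : Set (Formula P)} (hG : MCS G) {χ : Formula P}
    (h : Prov G χ) : χ ∈ G := by
  have hc : Consistent (insert χ G) := fun hp => hG.1 <| by
    have h2 : Prov G (χ.imp .bot) := Prov.ded hp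
    exact Prov.of2 h h2 fun v h1 h2 => (evalB_imp v _ _).1 h2 h1
  have := hG.2 _ hc (Set.subset_insert _ _)
  rw [← this]; exact Set.mem_insert _ _

theorem MCS.neg_mem {P : Type} {G : Set (Formula P)} (hG : MCS G) {χ : Formula P}
    (h : χ ∉ G) : χ.neg ∈ G := by
  by_contra hn
  have hc : Consistent (insert χ G) := fun hp => by
    have h2 : Prov G (χ.imp .bot) := Prov.ded hp
    exact hn (hG.mem (Prov.of2 h2 h2 fun v h1 _ => by
      rw [evalB_imp, evalB_bot] at h1
      simpa [evalB] using h1))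
  have := hG.2 _ hc (Set.subset_insert _ _)
  exact h (by rw [← this]; exact Set.mem_insert _ _)

theorem MCS.not_both {P : Type} {G : Set (Formula P)} (hG : MCS G) {χ : Formula P}
    (h : χ ∈ G) (h' : χ.neg ∈ G) : False :=
  hG.1 (Prov.of2 (Prov.ofMem h) (Prov.ofMem h') fun v h1 h2 => by simp [evalB, h1] at h2)

theorem MCS.mp {P : Type} {G : Set (Formula P)} (hG : MCS G) {a b : Formula P}
    (h : Derivable (a.imp b)) (h' : a ∈ G) : b ∈ G :=
  hG.mem (Prov.of2 (Prov.ofDer h) (Prov.ofMem h') fun v h1 h2 => (evalB_imp v _ _).1 h1 h2)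

theorem MCS.and_mem {P : Type} {G : Set (Formula P)} (hG : MCS G) {a b : Formula P}
    (h : a ∈ G) (h' : b ∈ G) : a.and b ∈ G :=
  hG.mem (Prov.of2 (Prov.ofMem h) (Prov.ofMem h') fun v h1 h2 => by simp [evalB, h1, h2])

theorem MCS.U_closed {P : Type} {G : Set (Formula P)} (hG : MCS G) (l : List (Formula P)) :
    ∀ χ : Formula P, (∀ x ∈ l, x.U ∈ G) →
      Derivable ((l.foldr Formula.and Formula.top).imp χ) → χ.U ∈ G := by
  induction l with
  | nil =>
    intro χ _ hd
    exact hG.mem (Prov.ofDer (.necU (der_of hd fun v => by simp [evalB_imp, evalB])))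
  | cons a l ih =>
    intro χ hl hd
    have h1 : (a.imp χ).U ∈ G := ih _ (fun x hx => hl x (List.mem_cons_of_mem _ hx))
      (der_of hd fun v => by
        simp only [evalB_imp, List.foldr_cons, evalB, Bool.and_eq_true]
        tauto)
    exact hG.mp (.distU a χ) (hG.and_mem (hl a List.mem_cons_self) h1)

theorem lindenbaum {P : Type} {T : Set (Formula P)} (hT : Consistent T) :
    ∃ Θ, T ⊆ Θ ∧ MCS Θ := by
  obtain ⟨Θ, hTΘ, hm⟩ := zorn_subset_nonempty {D : Set (Formula P) | Consistent D} (by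
    intro c hc hch hne
    refine ⟨⋃₀ c, ?_, fun s hs => Set.subset_sUnion_of_mem hs⟩
    rintro ⟨l, hl, hd⟩
    have key : ∀ m : List (Formula P), (∀ x ∈ m, x ∈ ⋃₀ c) → ∃ D ∈ c, ∀ x ∈ m, x ∈ D := by
      intro m
      induction m with
      | nil => intro _; exact ⟨_, hne.some_mem, by simp⟩
      | cons a m ih =>
        intro hm
        obtain ⟨D, hD, hmD⟩ := ih fun x hx => hm x (List.mem_cons_of_mem _ hx)
        obtain ⟨E, hE, haE⟩ := hm a List.mem_cons_self
        rcases hch.total hD hE with hs | hs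
        · refine ⟨E, hE, fun x hx => ?_⟩
          rcases List.mem_cons.1 hx with rfl | hx
          · exact haE
          · exact hs (hmD x hx)
        · refine ⟨D, hD, fun x hx => ?_⟩
          rcases List.mem_cons.1 hx with rfl | hx
          · exact hs haE
          · exact hmD x hx
    obtain ⟨D, hD, hlD⟩ := key l hl
    exact hc hD ⟨l, hlD, hd⟩) T hT
  exact ⟨Θ, hTΘ, hm.prop, fun D hD hs => (hm.eq_of_subset hD hs).symm⟩

/-- in the canonical model for a maximal consistent set Γ,
if φ belongs to every state Δ of S^c_Γ then Uφ belongs to every state Δ of S^c_Γ. -/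
theorem canonical_U_lemma {P : Type} (Γ : Set (Formula P)) (hΓ : MCS Γ)
    (φ : Formula P) (h : ∀ Δ ∈ canonStates Γ, φ ∈ Δ) :
    ∀ Δ ∈ canonStates Γ, φ.U ∈ Δ := by
  rintro Δ ⟨hΔ, hk⟩
  by_contra hn
  have hc : Consistent (insert φ.neg {χ | χ.U ∈ Δ}) := fun hp => by
    obtain ⟨l, hl, hd⟩ : Prov {χ | χ.U ∈ Δ} (φ.neg.imp .bot) := Prov.ded hp
    refine hn (hΔ.U_closed l φ hl (der_of hd fun v => ?_))
    rw [evalB_imp, evalB_imp, evalB_imp, evalB_bot]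
    intro h1 h2
    simpa [evalB] using h1 h2
  obtain ⟨Θ, hTΘ, hΘ⟩ := lindenbaum hc
  refine hΘ.not_both (h Θ ⟨hΘ, ?_⟩) (hTΘ (Set.mem_insert _ _))
  rw [← hk]
  ext χ
  constructor
  · rintro ⟨hx, a, b, rfl⟩
    refine ⟨?_, a, b, rfl⟩
    by_contra hx'
    exact hΘ.not_both hx (hTΘ (Set.mem_insert_of_mem _
      (hΔ.mp (.fiveKU a b) (hΔ.neg_mem hx'))))
  · rintro ⟨hx, a, b, rfl⟩
    exact ⟨hTΘ (Set.mem_insert_of_mem _ (hΔ.mp (.fourKU a b) hx)), a, b, rfl⟩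
end
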